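/- arXiv:2208.10521 — 3 statements merged into one kernel-verified Lean document; each statement's English description precedes it below -/
import Mathlib

section
/- Let k ≥ 4 be an even integer with k/2 a power of two, suppose the uncorrupted matrices {A°_i}_{i=1,…,n} are k-certifiably C-hypercontractive, and suppose 0 ≤ β < β_max (equivalently c_k < 1). Let μ̃ be a pseudo-distribution of level 2r, for some integer r ≥ k, that satisfies the system L at degree k and minimizes Ẽ_μ̃[((1/n)·∑_{i=1}^n ‖ȳ_i − Ā_iᵀ x‖²)^{k/2}] among all level-2r pseudo-distributions satisfying L at degree k. Then the estimate x̂ := Ẽ_μ̃[x] satisfies err(x̂) ≤ (1 + C₁(k,β)^{2/k})·opt + C₂(k,β)^{2/k}·((1/n)·∑_{i=1}^n ‖y°_i − (A°_i)ᵀ x*‖^k)^{2/k}. -/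
open scoped BigOperators
open MvPolynomial

noncomputable section

/-- A polynomial is a sum of squares. -/
def IsSOS {V : Type*} (p : MvPolynomial V ℝ) : Prop :=
  ∃ (N : ℕ) (q : Fin N → MvPolynomial V ℝ), p = ∑ j, q j ^ 2

/-- A degree-`k` sum-of-squares proof that the system `{A i ≥ 0}` implies `g ≥ 0`:
a family of sos polynomials `P S`, indexed by the subsets `S` of the constraint
indices, with `g = ∑_S P S · ∏_{i∈S} A i` and every summand of degree at most `k`. -/
def SosProof {V ι : Type*} [Fintype ι] [DecidableEq ι]
    (A : ι → MvPolynomial V ℝ) (k : ℕ) (g : MvPolynomial V ℝ) : Prop :=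
  ∃ P : Finset ι → MvPolynomial V ℝ,
    (∀ S, IsSOS (P S)) ∧
    g = ∑ S : Finset ι, P S * ∏ i ∈ S, A i ∧
    ∀ S : Finset ι, (P S * ∏ i ∈ S, A i).totalDegree ≤ k

/-- Pseudo-expectation of `f` under the finitely supported `μ`. -/
def pExpect {V : Type*} (μ : (V → ℝ) →₀ ℝ) (f : (V → ℝ) → ℝ) : ℝ :=
  ∑ z ∈ μ.support, μ z * f z

/-- `μ` is a pseudo-distribution of level `ℓ`: finitely supported, total mass one,
and nonnegative pseudo-expectation on every square of a polynomial of degree `≤ ℓ/2`. -/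
def IsPseudoDist {V : Type*} (μ : (V → ℝ) →₀ ℝ) (ℓ : ℕ) : Prop :=
  (∑ z ∈ μ.support, μ z) = 1 ∧
  ∀ p : MvPolynomial V ℝ, p.totalDegree ≤ ℓ / 2 →
    0 ≤ pExpect μ fun z => MvPolynomial.eval z p ^ 2

/-- A level-`ℓ` pseudo-distribution `μ` satisfies the system `{A i ≥ 0}` at degree `k`. -/
def PDSatisfies {V ι : Type*} [Fintype ι] [DecidableEq ι]
    (μ : (V → ℝ) →₀ ℝ) (ℓ : ℕ) (A : ι → MvPolynomial V ℝ) (k : ℕ) : Prop :=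
  ∀ (S : Finset ι) (h : MvPolynomial V ℝ), IsSOS h →
    h.totalDegree + ∑ i ∈ S, max (A i).totalDegree k ≤ ℓ →
    0 ≤ pExpect μ fun z => MvPolynomial.eval z (h * ∏ i ∈ S, A i)

/-- The polynomial `‖A_iᵀ v‖²` in the indeterminate `v ∈ ℝ^{dx}`. -/
def normAPoly {n dx dy : ℕ} (A : Fin n → Matrix (Fin dx) (Fin dy) ℝ) (i : Fin n) :
    MvPolynomial (Fin dx) ℝ :=
  ∑ j, (∑ k, C (A i k j) * X k) ^ 2

/-- The list `A_1, …, A_n` is `k`-certifiably `C`-hypercontractive: for every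
`1 ≤ t ≤ k/2`, `C(t)^t·((1/n)∑_i ‖A_iᵀ v‖²)^t − (1/n)∑_i ‖A_iᵀ v‖^{2t}` is sos. -/
def Hypercontractive {n dx dy : ℕ} (A : Fin n → Matrix (Fin dx) (Fin dy) ℝ)
    (k : ℕ) (Cf : ℕ → ℝ) : Prop :=
  ∀ t : ℕ, 1 ≤ t → t ≤ k / 2 →
    IsSOS (C (Cf t ^ t) * (C ((n : ℝ)⁻¹) * ∑ i, normAPoly A i) ^ t -
      C ((n : ℝ)⁻¹) * ∑ i, normAPoly A i ^ t)

/-- Variables of the (LTS1) system: `ω ∈ ℝⁿ`, `x ∈ ℝ^{dx}`, `ȳ_i ∈ ℝ^{dy}`,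
`Ā_i ∈ ℝ^{dx×dy}`. -/
abbrev V3 (n dx dy : ℕ) : Type :=
  Fin n ⊕ Fin dx ⊕ (Fin n × Fin dy) ⊕ (Fin n × Fin dx × Fin dy)

def Xw {n dx dy : ℕ} (i : Fin n) : MvPolynomial (V3 n dx dy) ℝ := X (Sum.inl i)
def Xx3 {n dx dy : ℕ} (k : Fin dx) : MvPolynomial (V3 n dx dy) ℝ :=
  X (Sum.inr (Sum.inl k))
def Xy3 {n dx dy : ℕ} (i : Fin n) (j : Fin dy) : MvPolynomial (V3 n dx dy) ℝ :=
  X (Sum.inr (Sum.inr (Sum.inl (i, j))))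
def XA3 {n dx dy : ℕ} (i : Fin n) (k : Fin dx) (j : Fin dy) :
    MvPolynomial (V3 n dx dy) ℝ :=
  X (Sum.inr (Sum.inr (Sum.inr (i, k, j))))

/-- The system `L` of polynomial constraints of problem (LTS1), with `α = 1 − β`:
`ω_i² = ω_i`, `∑ ω_i = αn`, `ω_i·(ȳ_i − y_i) = 0`, `ω_i·(Ā_i − A_i) = 0`
(equalities encoded as pairs of inequalities), and the description of `𝕏`. -/
def sysL {n dx dy mX : ℕ} (y : Fin n → Fin dy → ℝ)
    (A : Fin n → Matrix (Fin dx) (Fin dy) ℝ)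
    (g : Fin mX → MvPolynomial (Fin dx) ℝ) (α : ℝ) :
    Fin n ⊕ Fin n ⊕ Fin 2 ⊕ (Fin n × Fin dy) ⊕ (Fin n × Fin dy) ⊕
        (Fin n × Fin dx × Fin dy) ⊕ (Fin n × Fin dx × Fin dy) ⊕ Fin mX →
      MvPolynomial (V3 n dx dy) ℝ
  | Sum.inl i => Xw i - Xw i ^ 2
  | Sum.inr (Sum.inl i) => Xw i ^ 2 - Xw i
  | Sum.inr (Sum.inr (Sum.inl j)) =>
      if j = 0 then C (α * n) - ∑ i, Xw i else (∑ i, Xw i) - C (α * n)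
  | Sum.inr (Sum.inr (Sum.inr (Sum.inl (i, j)))) => Xw i * (Xy3 i j - C (y i j))
  | Sum.inr (Sum.inr (Sum.inr (Sum.inr (Sum.inl (i, j))))) =>
      -(Xw i * (Xy3 i j - C (y i j)))
  | Sum.inr (Sum.inr (Sum.inr (Sum.inr (Sum.inr (Sum.inl (i, k, j)))))) =>
      Xw i * (XA3 i k j - C (A i k j))
  | Sum.inr (Sum.inr (Sum.inr (Sum.inr (Sum.inr (Sum.inr (Sum.inl (i, k, j))))))) =>
      -(Xw i * (XA3 i k j - C (A i k j)))
  | Sum.inr (Sum.inr (Sum.inr (Sum.inr (Sum.inr (Sum.inr (Sum.inr j)))))) =>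
      rename (fun k => Sum.inr (Sum.inl k)) (g j)

/-- The objective polynomial of (LTS1): `((1/n)·∑_i ‖ȳ_i − Ā_iᵀ x‖²)^{k/2}`. -/
def objLTS1 (n dx dy : ℕ) (k : ℕ) : MvPolynomial (V3 n dx dy) ℝ :=
  (C ((n : ℝ)⁻¹) * ∑ i, ∑ j, (Xy3 i j - ∑ k', XA3 i k' j * Xx3 k') ^ 2) ^ (k / 2)

/-- The error `err(x) = (1/n)·∑_i ‖y°_i − (A°_i)ᵀ x‖²` with respect to the
uncorrupted measurements. -/
def errF {n dx dy : ℕ} (y0 : Fin n → Fin dy → ℝ)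
    (A0 : Fin n → Matrix (Fin dx) (Fin dy) ℝ) (x : Fin dx → ℝ) : ℝ :=
  (n : ℝ)⁻¹ * ∑ i, ∑ j, (y0 i j - ∑ k, A0 i k j * x k) ^ 2


section helpers

lemma h_sos_iff {V : Type*} (p : MvPolynomial V ℝ) : IsSOS p ↔ IsSumSq p := by
  constructor
  · rintro ⟨N, q, rfl⟩
    exact IsSumSq.sum fun i _ => by
      rw [pow_two]; exact IsSumSq.mul_self _
  · intro h
    induction h with
    | zero => exact ⟨0, fun _ => 0, by simp⟩
    | sq_add a hs ih =>
      obtain ⟨N, q, rfl⟩ := ih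
      exact ⟨N + 1, Fin.cons a q, by simp [Fin.sum_univ_succ, pow_two]⟩

lemma ss_sq {R : Type*} [CommRing R] (a : R) : IsSumSq (a ^ 2) := by
  rw [pow_two]; exact IsSumSq.mul_self _

lemma ss_pow {R : Type*} [CommRing R] {a : R} (h : IsSumSq a) (m : ℕ) : IsSumSq (a ^ m) := by
  induction m with
  | zero => rw [pow_zero]; exact IsSumSq.one
  | succ m ih => rw [pow_succ]; exact ih.mul h

lemma ss_C {V : Type*} {c : ℝ} (hc : 0 ≤ c) : IsSumSq (C c : MvPolynomial V ℝ) := by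
  have : (C c : MvPolynomial V ℝ) = C (√c) ^ 2 := by
    rw [← C_pow, Real.sq_sqrt hc]
  rw [this]; exact ss_sq _

lemma ss_nat {R : Type*} [CommRing R] (m : ℕ) : IsSumSq (m : R) := by
  induction m with
  | zero => simp
  | succ m ih => push_cast; exact ih.add IsSumSq.one

lemma ss_young {R : Type*} [CommRing R] {a b : R} (ha : IsSumSq a) (hb : IsSumSq b) (m : ℕ) :
    IsSumSq ((m : R) * a ^ (m + 1) + b ^ (m + 1) - ((m + 1 : ℕ) : R) * (a ^ m * b)) := by
  induction m with
  | zero => simp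
  | succ m ih =>
    have : (((m + 1 : ℕ) : R) * a ^ (m + 1 + 1) + b ^ (m + 1 + 1)
        - ((m + 1 + 1 : ℕ) : R) * (a ^ (m + 1) * b)) =
        b * ((m : R) * a ^ (m + 1) + b ^ (m + 1) - ((m + 1 : ℕ) : R) * (a ^ m * b)) +
        ((m + 1 : ℕ) : R) * a ^ m * (a - b) ^ 2 := by push_cast; ring
    rw [this]
    exact (hb.mul ih).add (((ss_nat _).mul (ss_pow ha _)).mul (ss_sq _))

lemma ss_pow_mono {R : Type*} [CommRing R] {f g : R} (hf : IsSumSq f) (h : IsSumSq (g - f))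
    (m : ℕ) : IsSumSq (g ^ m - f ^ m) := by
  have hg : IsSumSq g := by simpa using h.add hf
  induction m with
  | zero => simp
  | succ m ih =>
    have : g ^ (m + 1) - f ^ (m + 1) = g * (g ^ m - f ^ m) + (g - f) * f ^ m := by ring
    rw [this]
    exact (hg.mul ih).add (h.mul (ss_pow hf _))

lemma ss_cheb {R : Type*} [CommRing R] {a b : R} (ha : IsSumSq a) (hb : IsSumSq b) (m : ℕ) :
    IsSumSq ((a - b) * (a ^ m - b ^ m)) := by
  induction m with
  | zero => simp
  | succ m ih =>
    have : (a - b) * (a ^ (m + 1) - b ^ (m + 1)) =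
      a * ((a - b) * (a ^ m - b ^ m)) + (a - b) ^ 2 * b ^ m := by ring
    rw [this]
    exact (ha.mul ih).add ((ss_sq _).mul (ss_pow hb _))

lemma ss_add_pow {R : Type*} [CommRing R] {a b : R} (ha : IsSumSq a) (hb : IsSumSq b) (m : ℕ) :
    IsSumSq (2 ^ m * (a ^ (m + 1) + b ^ (m + 1)) - (a + b) ^ (m + 1)) := by
  induction m with
  | zero => simp
  | succ m ih =>
    have : 2 ^ (m + 1) * (a ^ (m + 1 + 1) + b ^ (m + 1 + 1)) - (a + b) ^ (m + 1 + 1) =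
      (a + b) * (2 ^ m * (a ^ (m + 1) + b ^ (m + 1)) - (a + b) ^ (m + 1)) +
      2 ^ m * ((a - b) * (a ^ (m + 1) - b ^ (m + 1))) := by ring
    rw [this]
    refine ((ha.add hb).mul ih).add (IsSumSq.mul ?_ (ss_cheb ha hb _))
    have := ss_nat (R := R) (2 ^ m)
    simpa using this

lemma sc_holder {X u v : ℝ} (m : ℕ) (hX : 0 ≤ X) (hu : 0 ≤ u) (hv : 0 ≤ v)
    (h : ∀ l : ℝ, 0 < l → ((m + 1 : ℕ) : ℝ) * (l * X) ≤ m * u + l ^ (m + 1) * v) :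
    X ^ (m + 1) ≤ u ^ m * v := by
  have key : ∀ ε : ℝ, 0 < ε → X ^ (m + 1) ≤ (u + ε) ^ m * (v + ε) := by
    intro ε hε
    have hu' : 0 < u + ε := by linarith
    have hv' : 0 < v + ε := by linarith
    set l := ((u + ε) / (v + ε)) ^ ((1 : ℝ) / ((m + 1 : ℕ) : ℝ)) with hl
    have hlpos : 0 < l := Real.rpow_pos_of_pos (div_pos hu' hv') _
    have hlp : l ^ (m + 1) = (u + ε) / (v + ε) := by
      rw [hl, one_div]
      exact Real.rpow_inv_natCast_pow (div_pos hu' hv').le (Nat.succ_ne_zero m)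
    have h1 := h l hlpos
    have h2 : l ^ (m + 1) * v ≤ u + ε := by
      calc l ^ (m + 1) * v ≤ l ^ (m + 1) * (v + ε) := by gcongr; linarith
        _ = u + ε := by rw [hlp]; field_simp
    have h3 : l * X ≤ u + ε := by
      have hm : (0 : ℝ) < ((m + 1 : ℕ) : ℝ) := by positivity
      have : ((m + 1 : ℕ) : ℝ) * (l * X) ≤ ((m + 1 : ℕ) : ℝ) * (u + ε) := by
        have : (m : ℝ) * u ≤ m * (u + ε) := by gcongr; linarith
        push_cast at *
        linarith
      exact le_of_mul_le_mul_left this hm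
    have h4 : (l * X) ^ (m + 1) ≤ (u + ε) ^ (m + 1) := by gcongr
    rw [mul_pow, hlp, div_mul_eq_mul_div, div_le_iff₀ hv', pow_succ (u + ε) m] at h4
    have : (u + ε) * X ^ (m + 1) ≤ (u + ε) * ((u + ε) ^ m * (v + ε)) := by linarith
    exact le_of_mul_le_mul_left this hu'
  have hc : Continuous fun ε : ℝ => (u + ε) ^ m * (v + ε) := by fun_prop
  have ht : Filter.Tendsto (fun ε : ℝ => (u + ε) ^ m * (v + ε)) (nhdsWithin 0 (Set.Ioi 0))
      (nhds (u ^ m * v)) := by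
    have := (hc.tendsto 0).mono_left (nhdsWithin_le_nhds (s := Set.Ioi 0))
    simpa using this
  exact ge_of_tendsto ht (by filter_upwards [self_mem_nhdsWithin] with ε hε using key ε hε)

/-- final scalar argument -/
lemma sc_final {E R T opt β γ Cp ck C1 C2 X1 X2 m1 : ℝ} (m : ℕ)
    (hE : 0 ≤ E) (hR : 0 ≤ R) (hT : 0 ≤ T) (hopt : 0 ≤ opt) (hβ : 0 ≤ β) (hCp : 0 ≤ Cp)
    (hX1 : 0 ≤ X1) (hX2 : 0 ≤ X2)
    (hEX : E ≤ X1 + X2)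
    (h1 : X1 ^ (m + 1) ≤ E ^ m * opt ^ (m + 1))
    (h2 : X2 ^ (m + 1) ≤ (2 * β * E) ^ m * R)
    (hγ : γ = (2 * β) ^ m * Cp)
    (hRb : R ≤ 2 ^ (2 * m + 1) * T + Cp * 2 ^ (4 * m + 2) * (E + opt ^ (m + 1)))
    (hck : ck = γ * 2 ^ (m + 1) * 2 ^ (4 * (m + 1))) (hck1 : ck < 1)
    (hC1 : C1 = ck / (1 - ck))
    (hC2 : C2 = (2 * β) ^ m * (2 ^ (2 * (m + 1)) + Cp * 2 ^ (4 * (m + 1))) / (1 - ck))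
    (hm1 : m1 ^ (m + 1) ≤ E) (hm0 : 0 ≤ m1) :
    m1 ≤ (1 + C1 ^ ((1 : ℝ) / ((m + 1 : ℕ) : ℝ))) * opt
      + C2 ^ ((1 : ℝ) / ((m + 1 : ℕ) : ℝ)) * T ^ ((1 : ℝ) / ((m + 1 : ℕ) : ℝ)) := by
  have root : ∀ a : ℝ, 0 ≤ a → (0 ≤ a ^ ((1 : ℝ) / ((m + 1 : ℕ) : ℝ)) ∧
      (a ^ ((1 : ℝ) / ((m + 1 : ℕ) : ℝ))) ^ (m + 1) = a) := by
    intro a ha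
    refine ⟨Real.rpow_nonneg ha _, ?_⟩
    rw [one_div]
    exact Real.rpow_inv_natCast_pow ha (Nat.succ_ne_zero m)
  have hb0 : 0 ≤ (2 * β) ^ m := by positivity
  have hγ0 : 0 ≤ γ := by rw [hγ]; positivity
  have hck0 : 0 ≤ ck := by rw [hck]; positivity
  have h1c : 0 < 1 - ck := by linarith
  have hC10 : 0 ≤ C1 := by rw [hC1]; positivity
  have hC20 : 0 ≤ C2 := by rw [hC2]; positivity
  obtain ⟨e, he0, he⟩ : ∃ e : ℝ, 0 ≤ e ∧ e ^ (m + 1) = E := ⟨_, root E hE⟩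
  obtain ⟨δ, hδ0, hδ⟩ : ∃ δ : ℝ, 0 ≤ δ ∧ δ ^ (m + 1) = (2 * β) ^ m * R :=
    ⟨_, root _ (by positivity)⟩
  obtain ⟨hc1, hc1'⟩ := root C1 hC10
  obtain ⟨hc2, hc2'⟩ := root C2 hC20
  obtain ⟨hc3, hc3'⟩ := root T hT
  set c1 := C1 ^ ((1 : ℝ) / ((m + 1 : ℕ) : ℝ))
  set c2 := C2 ^ ((1 : ℝ) / ((m + 1 : ℕ) : ℝ))
  set t := T ^ ((1 : ℝ) / ((m + 1 : ℕ) : ℝ))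
  have hX1' : X1 ≤ e ^ m * opt := by
    refine le_of_pow_le_pow_left₀ (Nat.succ_ne_zero m) (by positivity) (h1.trans (le_of_eq ?_))
    rw [Nat.succ_eq_add_one, ← he]; ring
  have hX2' : X2 ≤ e ^ m * δ := by
    refine le_of_pow_le_pow_left₀ (Nat.succ_ne_zero m) (by positivity) (h2.trans (le_of_eq ?_))
    rw [Nat.succ_eq_add_one, mul_pow (e ^ m) δ, hδ, ← he]; ring
  have hm1e : m1 ≤ e := le_of_pow_le_pow_left₀ (Nat.succ_ne_zero m) he0 (by rw [Nat.succ_eq_add_one, he]; exact hm1)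
  have hed : e ≤ opt + δ := by
    rcases he0.eq_or_lt with h0 | h0
    · rw [← h0]; positivity
    · have : e ^ m * e ≤ e ^ m * (opt + δ) := by
        rw [← pow_succ, he]; linarith
      exact le_of_mul_le_mul_left this (by positivity)
  have hEb : E ≤ 2 ^ m * (opt ^ (m + 1) + δ ^ (m + 1)) := by
    rw [← he]
    have h5 : e ^ (m + 1) ≤ (opt + δ) ^ (m + 1) := by gcongr
    have := add_pow_le hopt hδ0 (m + 1)
    simp only [Nat.add_sub_cancel] at this
    linarith
  have hδb : δ ^ (m + 1) ≤ C1 * opt ^ (m + 1) + C2 * T := by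
    set D := δ ^ (m + 1) with hD
    set O := opt ^ (m + 1) with hO
    have hD0 : 0 ≤ D := by positivity
    have hO0 : 0 ≤ O := by positivity
    have e1 : D ≤ (2 * β) ^ m * (2 ^ (2 * m + 1) * T + Cp * 2 ^ (4 * m + 2) * (E + O)) := by
      rw [hδ]; gcongr
    have e2 : D ≤ (2 * β) ^ m * 2 ^ (2 * m + 1) * T
        + γ * 2 ^ (4 * m + 2) * (2 ^ m * (O + D) + O) := by
      refine e1.trans ?_
      have : γ * 2 ^ (4 * m + 2) * (E + O) ≤ γ * 2 ^ (4 * m + 2) * (2 ^ m * (O + D) + O) := by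
        gcongr
      rw [hγ] at this ⊢
      linarith
    have e3 : (1 - ck) * D ≤ ck * O +
        (2 * β) ^ m * (2 ^ (2 * (m + 1)) + Cp * 2 ^ (4 * (m + 1))) * T := by
      have hp : (1 : ℝ) ≤ 2 ^ m := one_le_pow₀ (by norm_num)
      have q1 : γ * 2 ^ (4 * m + 2) * O ≤ γ * 2 ^ (4 * m + 2) * 2 ^ m * O := by
        have : 0 ≤ γ * 2 ^ (4 * m + 2) * O := by positivity
        nlinarith
      have q2 : ck = 8 * (γ * 2 ^ (4 * m + 2) * 2 ^ m) := by
        rw [hck]; ring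
      have q3 : 0 ≤ γ * 2 ^ (4 * m + 2) * 2 ^ m := by positivity
      set κ := γ * 2 ^ (4 * m + 2) * 2 ^ m
      have q4 : (2 * β) ^ m * 2 ^ (2 * (m + 1)) * T = 2 * ((2 * β) ^ m * 2 ^ (2 * m + 1) * T) := by
        ring
      have q5 : 0 ≤ (2 * β) ^ m * 2 ^ (2 * m + 1) * T := by positivity
      have q6 : 0 ≤ (2 * β) ^ m * (Cp * 2 ^ (4 * (m + 1))) * T := by positivity
      have q7 : γ * 2 ^ (4 * m + 2) * (2 ^ m * (O + D) + O) = κ * O + κ * D +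
        γ * 2 ^ (4 * m + 2) * O := by simp only [κ]; ring
      rw [q7] at e2
      rw [q2]
      have := mul_nonneg q3 hO0
      have := mul_nonneg q3 hD0
      linarith
    have e4 : C1 * O + C2 * T = (ck * O +
        (2 * β) ^ m * (2 ^ (2 * (m + 1)) + Cp * 2 ^ (4 * (m + 1))) * T) / (1 - ck) := by
      rw [hC1, hC2]; field_simp
    rw [e4, le_div_iff₀ h1c]; linarith
  have hδf : δ ≤ c1 * opt + c2 * t := by
    refine le_of_pow_le_pow_left₀ (Nat.succ_ne_zero m) (by positivity) (hδb.trans ?_)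
    have := pow_add_pow_le (by positivity : 0 ≤ c1 * opt) (by positivity : 0 ≤ c2 * t)
      (Nat.succ_ne_zero m)
    refine le_trans (le_of_eq ?_) this
    rw [Nat.succ_eq_add_one, mul_pow, mul_pow, hc1', hc2', hc3']
  linarith

lemma dg_mul {V : Type*} {a b : MvPolynomial V ℝ} {i j d : ℕ} (ha : a.totalDegree ≤ i)
    (hb : b.totalDegree ≤ j) (h : i + j ≤ d) : (a * b).totalDegree ≤ d :=
  (totalDegree_mul a b).trans (by omega)
lemma dg_pow {V : Type*} {a : MvPolynomial V ℝ} {i d : ℕ} (m : ℕ) (ha : a.totalDegree ≤ i)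
    (h : m * i ≤ d) : (a ^ m).totalDegree ≤ d :=
  (totalDegree_pow a m).trans ((Nat.mul_le_mul_left m ha).trans h)
lemma dg_add {V : Type*} {a b : MvPolynomial V ℝ} {d : ℕ} (ha : a.totalDegree ≤ d)
    (hb : b.totalDegree ≤ d) : (a + b).totalDegree ≤ d :=
  (totalDegree_add a b).trans (max_le ha hb)
lemma dg_sub {V : Type*} {a b : MvPolynomial V ℝ} {d : ℕ} (ha : a.totalDegree ≤ d)
    (hb : b.totalDegree ≤ d) : (a - b).totalDegree ≤ d :=
  (totalDegree_sub a b).trans (max_le ha hb)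
lemma dg_C {V : Type*} (c : ℝ) (d : ℕ) : (C c : MvPolynomial V ℝ).totalDegree ≤ d := by simp
lemma dg_one {V : Type*} (d : ℕ) : (1 : MvPolynomial V ℝ).totalDegree ≤ d := by simp
lemma dg_X {V : Type*} (v : V) {d : ℕ} (h : 1 ≤ d) : (X v : MvPolynomial V ℝ).totalDegree ≤ d := by
  rw [totalDegree_X]; exact h
lemma dg_sum {V ι : Type*} (s : Finset ι) (f : ι → MvPolynomial V ℝ) {d : ℕ}
    (h : ∀ i ∈ s, (f i).totalDegree ≤ d) : (∑ i ∈ s, f i).totalDegree ≤ d :=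
  totalDegree_finsetSum_le h

end helpers

section core

variable {n dx dy : ℕ}

def Rp (y0 : Fin n → Fin dy → ℝ) (A0 : Fin n → Matrix (Fin dx) (Fin dy) ℝ)
    (i : Fin n) (j : Fin dy) : MvPolynomial (V3 n dx dy) ℝ :=
  C (y0 i j) - ∑ k, C (A0 i k j) * Xx3 k

def rp (y0 : Fin n → Fin dy → ℝ) (A0 : Fin n → Matrix (Fin dx) (Fin dy) ℝ)
    (i : Fin n) : MvPolynomial (V3 n dx dy) ℝ := ∑ j, Rp y0 A0 i j ^ 2

def errp (y0 : Fin n → Fin dy → ℝ) (A0 : Fin n → Matrix (Fin dx) (Fin dy) ℝ) :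
    MvPolynomial (V3 n dx dy) ℝ := C ((n : ℝ)⁻¹) * ∑ i, rp y0 A0 i

def Fp (i : Fin n) (j : Fin dy) : MvPolynomial (V3 n dx dy) ℝ :=
  Xy3 i j - ∑ k', XA3 i k' j * Xx3 k'

def objp (n dx dy : ℕ) : MvPolynomial (V3 n dx dy) ℝ :=
  C ((n : ℝ)⁻¹) * ∑ i, ∑ j, Fp i j ^ 2

def app (A0 : Fin n → Matrix (Fin dx) (Fin dy) ℝ) (xs : Fin dx → ℝ)
    (i : Fin n) : MvPolynomial (V3 n dx dy) ℝ :=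
  ∑ j, (∑ k, C (A0 i k j) * (Xx3 k - C (xs k))) ^ 2

lemma dg_Xx (k : Fin dx) {d : ℕ} (h : 1 ≤ d) :
    (Xx3 k : MvPolynomial (V3 n dx dy) ℝ).totalDegree ≤ d := dg_X _ h
lemma dg_Xw (k : Fin n) {d : ℕ} (h : 1 ≤ d) :
    (Xw k : MvPolynomial (V3 n dx dy) ℝ).totalDegree ≤ d := dg_X _ h

lemma dg_Rp (y0 : Fin n → Fin dy → ℝ) (A0 : Fin n → Matrix (Fin dx) (Fin dy) ℝ)
    (i : Fin n) (j : Fin dy) : (Rp y0 A0 i j).totalDegree ≤ 1 :=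
  dg_sub (dg_C _ _) (dg_sum _ _ fun k _ => dg_mul (dg_C _ 0) (dg_Xx k le_rfl) le_rfl)

lemma dg_rp (y0 : Fin n → Fin dy → ℝ) (A0 : Fin n → Matrix (Fin dx) (Fin dy) ℝ)
    (i : Fin n) : (rp y0 A0 i).totalDegree ≤ 2 :=
  dg_sum _ _ fun j _ => dg_pow 2 (dg_Rp y0 A0 i j) le_rfl

lemma dg_errp (y0 : Fin n → Fin dy → ℝ) (A0 : Fin n → Matrix (Fin dx) (Fin dy) ℝ) :
    (errp y0 A0).totalDegree ≤ 2 :=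
  dg_mul (dg_C _ 0) (dg_sum _ _ fun i _ => dg_rp y0 A0 i) le_rfl

lemma dg_Fp (i : Fin n) (j : Fin dy) :
    (Fp i j : MvPolynomial (V3 n dx dy) ℝ).totalDegree ≤ 2 :=
  dg_sub (dg_X _ (by norm_num))
    (dg_sum _ _ fun k _ => dg_mul (dg_X _ le_rfl) (dg_Xx k le_rfl) le_rfl)

lemma dg_objp : (objp n dx dy).totalDegree ≤ 4 :=
  dg_mul (dg_C _ 0) (dg_sum _ _ fun i _ => dg_sum _ _ fun j _ => dg_pow 2 (dg_Fp i j) le_rfl) le_rfl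

lemma dg_app (A0 : Fin n → Matrix (Fin dx) (Fin dy) ℝ) (xs : Fin dx → ℝ)
    (i : Fin n) : (app A0 xs i).totalDegree ≤ 2 :=
  dg_sum _ _ fun j _ => dg_pow (i := 1) 2 (dg_sum _ _ fun k _ =>
    dg_mul (dg_C _ 0) (dg_sub (dg_Xx k le_rfl) (dg_C _ _)) le_rfl) le_rfl

lemma ss_rp (y0 : Fin n → Fin dy → ℝ) (A0 : Fin n → Matrix (Fin dx) (Fin dy) ℝ)
    (i : Fin n) : IsSumSq (rp y0 A0 i) := IsSumSq.sum fun _ _ => ss_sq _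
lemma ss_errp (y0 : Fin n → Fin dy → ℝ) (A0 : Fin n → Matrix (Fin dx) (Fin dy) ℝ) :
    IsSumSq (errp y0 A0) := (ss_C (by positivity)).mul (IsSumSq.sum fun i _ => ss_rp y0 A0 i)
lemma ss_objp : IsSumSq (objp n dx dy) :=
  (ss_C (by positivity)).mul (IsSumSq.sum fun i _ => IsSumSq.sum fun _ _ => ss_sq _)
lemma ss_app (A0 : Fin n → Matrix (Fin dx) (Fin dy) ℝ) (xs : Fin dx → ℝ)
    (i : Fin n) : IsSumSq (app A0 xs i) := IsSumSq.sum fun _ _ => ss_sq _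

/-- moment bound as an sos inequality -/
lemma R_bound_sos (y0 : Fin n → Fin dy → ℝ) (A0 : Fin n → Matrix (Fin dx) (Fin dy) ℝ)
    (xs : Fin dx → ℝ) (m : ℕ) (Cp : ℝ) (hCp : 0 ≤ Cp)
    (hh : IsSumSq (C Cp * (C ((n : ℝ)⁻¹) * ∑ i, app (dy := dy) A0 xs i) ^ (m + 1) -
      C ((n : ℝ)⁻¹) * ∑ i, app A0 xs i ^ (m + 1))) :
    IsSumSq ((C (2 ^ (2 * m + 1) * ((n : ℝ)⁻¹ *
          ∑ i, (∑ j, (y0 i j - ∑ k', A0 i k' j * xs k') ^ 2) ^ (m + 1))) +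
        C (Cp * 2 ^ (4 * m + 2)) * (errp y0 A0 ^ (m + 1) + C (errF y0 A0 xs ^ (m + 1)))) -
      C ((n : ℝ)⁻¹) * ∑ i, rp y0 A0 i ^ (m + 1)) := by
  set s : Fin n → ℝ := fun i => ∑ j, (y0 i j - ∑ k', A0 i k' j * xs k') ^ 2 with hs
  have hs0 : ∀ i, 0 ≤ s i := fun i => Finset.sum_nonneg fun _ _ => sq_nonneg _
  have hRd : ∀ i j, Rp y0 A0 i j = C (y0 i j - ∑ k', A0 i k' j * xs k') -
      ∑ k, C (A0 i k j) * (Xx3 k - C (xs k)) := by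
    intro i j
    simp only [Rp, mul_sub, Finset.sum_sub_distrib, C_sub, map_sum, C_mul]
    ring
  -- r ≤ 2 s + 2 a
  have t1 : ∀ i, IsSumSq ((2 * C (s i) + 2 * app A0 xs i) - rp y0 A0 i) := by
    intro i
    have : (2 * C (s i) + 2 * app A0 xs i) - rp y0 A0 i =
        ∑ j, (C (y0 i j - ∑ k', A0 i k' j * xs k') +
          ∑ k, C (A0 i k j) * (Xx3 k - C (xs k))) ^ 2 := by
      simp only [hs, app, rp, hRd, map_sum, Finset.mul_sum, ← Finset.sum_add_distrib,
        ← Finset.sum_sub_distrib]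
      refine Finset.sum_congr rfl fun j _ => ?_
      rw [C_pow]; ring
    rw [this]; exact IsSumSq.sum fun _ _ => ss_sq _
  have t2 : ∀ i, IsSumSq (2 ^ (2 * m + 1) * (C (s i) ^ (m + 1) + app A0 xs i ^ (m + 1))
      - rp y0 A0 i ^ (m + 1)) := by
    intro i
    have h1 := ss_pow_mono (ss_rp y0 A0 i) (t1 i) (m + 1)
    have h2 := ss_add_pow ((ss_nat 2).mul (ss_C (V := V3 n dx dy) (hs0 i)))
      ((ss_nat 2).mul (ss_app A0 xs i)) m
    refine (congrArg IsSumSq ?_).mpr (h1.add h2)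
    push_cast
    ring
  -- avg a ≤ 2 err + 2 opt
  have t3 : IsSumSq ((2 * errp y0 A0 + 2 * C (errF y0 A0 xs)) -
      C ((n : ℝ)⁻¹) * ∑ i, app A0 xs i) := by
    have : (2 * errp y0 A0 + 2 * C (errF y0 A0 xs)) - C ((n : ℝ)⁻¹) * ∑ i, app A0 xs i =
       C ((n : ℝ)⁻¹) * ∑ i, ∑ j, (Rp y0 A0 i j + C (y0 i j - ∑ k', A0 i k' j * xs k')) ^ 2 := by
      simp only [errp, errF, rp, app, C_mul, map_sum]
      rw [mul_left_comm, mul_left_comm 2 (C _), ← mul_add, ← mul_sub]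
      congr 1
      simp only [Finset.mul_sum, ← Finset.sum_add_distrib, ← Finset.sum_sub_distrib]
      refine Finset.sum_congr rfl fun i _ => Finset.sum_congr rfl fun j _ => ?_
      rw [hRd]
      simp only [C_pow]; ring
    rw [this]
    exact (ss_C (by positivity)).mul (IsSumSq.sum fun i _ => IsSumSq.sum fun _ _ => ss_sq _)
  have hopt : 0 ≤ errF y0 A0 xs := by
    unfold errF
    exact mul_nonneg (by positivity)
      (Finset.sum_nonneg fun i _ => Finset.sum_nonneg fun _ _ => sq_nonneg _)
  have t4 : IsSumSq (2 ^ (2 * m + 1) * (errp y0 A0 ^ (m + 1) + C (errF y0 A0 xs) ^ (m + 1))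
      - (C ((n : ℝ)⁻¹) * ∑ i, app A0 xs i) ^ (m + 1)) := by
    have h1 := ss_pow_mono ((ss_C (by positivity)).mul
      (IsSumSq.sum fun i _ => ss_app A0 xs i)) t3 (m + 1)
    have h2 := ss_add_pow ((ss_nat 2).mul (ss_errp y0 A0))
      ((ss_nat 2).mul (ss_C (V := V3 n dx dy) hopt)) m
    refine (congrArg IsSumSq ?_).mpr (h1.add h2)
    push_cast
    ring
  have t5 := (ss_C (V := V3 n dx dy) (c := (n : ℝ)⁻¹) (by positivity)).mul
    (IsSumSq.sum (I := Finset.univ) fun i _ => t2 i)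
  have t6 := (ss_nat (R := MvPolynomial (V3 n dx dy) ℝ) (2 ^ (2 * m + 1))).mul hh
  have t7 := ((ss_nat (R := MvPolynomial (V3 n dx dy) ℝ) (2 ^ (2 * m + 1))).mul
    (ss_C (V := V3 n dx dy) hCp)).mul t4
  have hT : ∑ i, (∑ j, (y0 i j - ∑ k', A0 i k' j * xs k') ^ 2) ^ (m + 1) =
    ∑ i, s i ^ (m + 1) := rfl
  rw [hT]
  clear_value s
  refine (congrArg IsSumSq ?_).mpr ((t5.add t6).add t7)
  simp only [C_mul, C_pow, map_sum, Finset.sum_sub_distrib, ← Finset.mul_sum,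
    Finset.sum_add_distrib, map_ofNat, Nat.cast_pow, Nat.cast_ofNat]
  ring

end core

section core2

variable {n dx dy : ℕ}

lemma L_C {V : Type*} (L : MvPolynomial V ℝ →ₗ[ℝ] ℝ) (c : ℝ) (q : MvPolynomial V ℝ) :
    L (C c * q) = c * L q := by
  rw [C_mul', map_smul, smul_eq_mul]

set_option maxHeartbeats 1600000 in
theorem core_L (hn : 0 < n)
    (y0 : Fin n → Fin dy → ℝ) (A0 : Fin n → Matrix (Fin dx) (Fin dy) ℝ)
    (y : Fin n → Fin dy → ℝ) (A : Fin n → Matrix (Fin dx) (Fin dy) ℝ)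
    (β : ℝ) (hβ0 : 0 ≤ β)
    (G : Finset (Fin n)) (hGcard : (1 - β) * n ≤ G.card)
    (hG : ∀ i ∈ G, (∀ j, y i j = y0 i j) ∧ A i = A0 i)
    (xs : Fin dx → ℝ) (m : ℕ) (L : MvPolynomial (V3 n dx dy) ℝ →ₗ[ℝ] ℝ)
    (H1 : L 1 = 1)
    (H0 : ∀ h, IsSumSq h → h.totalDegree ≤ 4 * (m + 1) → 0 ≤ L h)
    (Hw : ∀ i h, IsSumSq h → h.totalDegree ≤ 2 * (m + 1) → L (h * (Xw i ^ 2 - Xw i)) = 0)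
    (Hs : ∀ h, IsSumSq h → h.totalDegree ≤ 2 * (m + 1) →
      L (h * (∑ i, Xw i - C ((1 - β) * n))) = 0)
    (Hy : ∀ i j h, IsSumSq h → h.totalDegree ≤ 2 * (m + 1) →
      L (h * (Xw i * (Xy3 i j - C (y i j)))) = 0)
    (HA : ∀ i k j h, IsSumSq h → h.totalDegree ≤ 2 * (m + 1) →
      L (h * (Xw i * (XA3 i k j - C (A i k j)))) = 0)
    (Hobj : L (objp n dx dy ^ (m + 1)) ≤ errF y0 A0 xs ^ (m + 1))
    (Cp : ℝ) (hCp : 0 ≤ Cp)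
    (hh : IsSumSq (C Cp * (C ((n : ℝ)⁻¹) * ∑ i, app (dy := dy) A0 xs i) ^ (m + 1) -
      C ((n : ℝ)⁻¹) * ∑ i, app A0 xs i ^ (m + 1)))
    (ck C1 C2 : ℝ)
    (hck : ck = (2 * β) ^ m * Cp * 2 ^ (m + 1) * 2 ^ (4 * (m + 1))) (hck1 : ck < 1)
    (hC1 : C1 = ck / (1 - ck))
    (hC2 : C2 = (2 * β) ^ m * (2 ^ (2 * (m + 1)) + Cp * 2 ^ (4 * (m + 1))) / (1 - ck)) :
    errF y0 A0 (fun k => L (Xx3 k)) ≤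
      (1 + C1 ^ ((1 : ℝ) / ((m + 1 : ℕ) : ℝ))) * errF y0 A0 xs
      + C2 ^ ((1 : ℝ) / ((m + 1 : ℕ) : ℝ)) * ((n : ℝ)⁻¹ *
          ∑ i, (∑ j, (y0 i j - ∑ k', A0 i k' j * xs k') ^ 2) ^ (m + 1)) ^
            ((1 : ℝ) / ((m + 1 : ℕ) : ℝ)) := by
  classical
  have hn' : (0 : ℝ) < n := by exact_mod_cast hn
  have hni : (0 : ℝ) ≤ (n : ℝ)⁻¹ := by positivity
  set e := errp y0 A0 with he
  set r := rp y0 A0 with hr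
  have se : IsSumSq e := ss_errp y0 A0
  have sr : ∀ i, IsSumSq (r i) := ss_rp y0 A0
  have de : e.totalDegree ≤ 2 := dg_errp y0 A0
  have dr : ∀ i, (r i).totalDegree ≤ 2 := dg_rp y0 A0
  have dem : ∀ l, (e ^ l).totalDegree ≤ 2 * l := fun l => dg_pow l de (by omega)
  have drm : ∀ i l, (r i ^ l).totalDegree ≤ 2 * l := fun i l => dg_pow l (dr i) (by omega)
  -- weights
  have W0 : ∀ i h, IsSumSq h → h.totalDegree ≤ 2 * (m + 1) → 0 ≤ L (h * Xw i) := by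
    intro i h sh dh
    have h1 := H0 (h * Xw i ^ 2) (sh.mul (ss_sq _))
      (dg_mul dh (dg_pow 2 (dg_Xw i le_rfl) le_rfl) (by omega))
    have h2 := Hw i h sh dh
    rw [mul_sub, map_sub] at h2
    linarith
  have W1 : ∀ i h, IsSumSq h → h.totalDegree ≤ 2 * (m + 1) → 0 ≤ L (h * (1 - Xw i)) := by
    intro i h sh dh
    have h1 := H0 (h * (1 - Xw i) ^ 2) (sh.mul (ss_sq _))
      (dg_mul dh (dg_pow 2 (dg_sub (dg_one 1) (dg_Xw i le_rfl)) le_rfl) (by omega))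
    have h2 := Hw i h sh dh
    have : h * (1 - Xw i) ^ 2 = h * (1 - Xw i) + h * (Xw i ^ 2 - Xw i) := by ring
    rw [this, map_add, h2] at h1
    linarith
  set u : Fin n → MvPolynomial (V3 n dx dy) ℝ := fun i => if i ∈ G then 1 - Xw i else 1 with hu
  have U0 : ∀ i h, IsSumSq h → h.totalDegree ≤ 2 * (m + 1) → 0 ≤ L (h * u i) := by
    intro i h sh dh
    by_cases hi : i ∈ G
    · simp only [hu, hi, if_true]; exact W1 i h sh dh
    · simp only [hu, hi, if_false, mul_one]; exact H0 h sh (by omega)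
  have U1 : ∀ i h, IsSumSq h → h.totalDegree ≤ 2 * (m + 1) → L (h * u i) ≤ L h := by
    intro i h sh dh
    by_cases hi : i ∈ G
    · simp only [hu, hi, if_true]
      rw [mul_sub, map_sub, mul_one]
      linarith [W0 i h sh dh]
    · simp only [hu, hi, if_false, mul_one]; exact le_rfl
  have US : ∀ h, IsSumSq h → h.totalDegree ≤ 2 * (m + 1) →
      (n : ℝ)⁻¹ * ∑ i, L (h * u i) ≤ 2 * β * L h := by
    intro h sh dh
    have hh0 : 0 ≤ L h := H0 h sh (by omega)
    have a1 : ∀ i, L (h * u i) ≤ (L h - L (h * Xw i)) + (if i ∈ G then 0 else L h) := by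
      intro i
      by_cases hi : i ∈ G
      · simp only [hu, hi, if_true]
        rw [mul_sub, map_sub, mul_one]; linarith
      · simp only [hu, hi, if_false, mul_one]
        have := W1 i h sh dh
        rw [mul_sub, map_sub, mul_one] at this
        linarith
    have a2 : ∑ i, L (h * Xw i) = (1 - β) * n * L h := by
      have := Hs h sh dh
      rw [mul_sub, map_sub, Finset.mul_sum, map_sum, mul_comm h (C _), L_C] at this
      linarith
    have a3 : ∑ i : Fin n, (if i ∈ G then 0 else L h) = (n - G.card) * L h := by
      have : ∀ i : Fin n, (if i ∈ G then 0 else L h) = L h - (if i ∈ G then L h else 0) := by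
        intro i; split_ifs <;> ring
      rw [Finset.sum_congr rfl fun i _ => this i, Finset.sum_sub_distrib]
      simp
      ring
    have a4 : ∑ i, L (h * u i) ≤ n * (2 * β * L h) := by
      refine (Finset.sum_le_sum fun i _ => a1 i).trans ?_
      rw [Finset.sum_add_distrib, Finset.sum_sub_distrib, a2, a3]
      simp only [Finset.sum_const, Finset.card_univ, Fintype.card_fin, nsmul_eq_mul]
      nlinarith
    rw [inv_mul_le_iff₀ hn']
    exact a4
  -- polarization
  have pol : ∀ (f a b h : MvPolynomial (V3 n dx dy) ℝ),
      (∀ h, IsSumSq h → h.totalDegree ≤ 2 * (m + 1) → L (h * f) = 0) → IsSumSq h →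
      h.totalDegree ≤ 2 * m → a.totalDegree ≤ 1 → b.totalDegree ≤ 1 →
      L (h * a * b * f) = 0 := by
    intro f a b h hf sh dh da db
    have h1 := hf (h * (a + b) ^ 2) (sh.mul (ss_sq _))
      (dg_mul dh (dg_pow 2 (dg_add da db) le_rfl) (by omega))
    have h2 := hf (h * (a - b) ^ 2) (sh.mul (ss_sq _))
      (dg_mul dh (dg_pow 2 (dg_sub da db) le_rfl) (by omega))
    have : h * a * b * f = C (1 / 4) * (h * (a + b) ^ 2 * f - h * (a - b) ^ 2 * f) := by
      have h4 : (C (1 / 4) : MvPolynomial (V3 n dx dy) ℝ) * 4 = 1 := by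
        rw [← map_ofNat C 4, ← C_mul]; norm_num
      linear_combination (-(h * a * b * f)) * h4
    rw [this, L_C, map_sub, h1, h2]; simp
  -- comparison on good indices
  have comp : ∀ i ∈ G, ∀ j, L (e ^ m * (Rp y0 A0 i j ^ 2 * Xw i)) ≤ L (e ^ m * Fp i j ^ 2) := by
    intro i hi j
    obtain ⟨hy, hA⟩ := hG i hi
    set Q := Rp y0 A0 i j with hQ
    have dQ : Q.totalDegree ≤ 1 := dg_Rp y0 A0 i j
    have b1 := H0 (e ^ m * (Fp i j - Xw i * Q) ^ 2) ((ss_pow se m).mul (ss_sq _))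
      (dg_mul (dem m) (dg_pow 2 (dg_sub (dg_Fp i j)
        (dg_mul (dg_Xw i le_rfl) dQ le_rfl)) le_rfl) (by omega))
    have b2 := Hw i (e ^ m * Q ^ 2) ((ss_pow se m).mul (ss_sq _))
      (dg_mul (dem m) (dg_pow 2 dQ le_rfl) (by omega))
    have b3 := pol _ Q 1 (e ^ m) (Hy i j) (ss_pow se m) (dem m) dQ (dg_one 1)
    have b4 := fun k' => pol _ Q (Xx3 k') (e ^ m) (HA i k' j) (ss_pow se m) (dem m) dQ
      (dg_Xx k' le_rfl)
    have b5 : e ^ m * (Fp i j - Xw i * Q) ^ 2 = e ^ m * Fp i j ^ 2 - e ^ m * (Q ^ 2 * Xw i)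
        + e ^ m * Q ^ 2 * (Xw i ^ 2 - Xw i)
        - C 2 * (e ^ m * Q * 1 * (Xw i * (Xy3 i j - C (y i j))) -
          ∑ k', e ^ m * Q * Xx3 k' * (Xw i * (XA3 i k' j - C (A i k' j)))) := by
      have c1 : ∑ k', e ^ m * Q * Xx3 k' * (Xw i * (XA3 i k' j - C (A i k' j))) =
          e ^ m * Q * Xw i * (∑ k', XA3 i k' j * Xx3 k' - ∑ k', C (A0 i k' j) * Xx3 k') := by
        rw [← Finset.sum_sub_distrib, Finset.mul_sum]
        refine Finset.sum_congr rfl fun k' _ => ?_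
        rw [hA]; ring
      have c2 : (C (y i j) : MvPolynomial (V3 n dx dy) ℝ) = Q + ∑ k', C (A0 i k' j) * Xx3 k' := by
        rw [hy, hQ, Rp]; ring
      have c3 : (Xy3 i j : MvPolynomial (V3 n dx dy) ℝ) = Fp i j + ∑ k', XA3 i k' j * Xx3 k' := by
        rw [Fp]; ring
      have c4 : (C 2 : MvPolynomial (V3 n dx dy) ℝ) = 2 := map_ofNat C 2
      rw [c1, c2, c3, c4]
      ring
    rw [b5, map_sub, map_add, map_sub, L_C, map_sub, map_sum, b2, b3,
      Finset.sum_eq_zero fun k' _ => b4 k'] at b1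
    linarith
  -- quantities
  set E := L (e ^ (m + 1)) with hE
  set X1 := L (e ^ m * objp n dx dy) with hX1
  set X2 := (n : ℝ)⁻¹ * ∑ i, L (e ^ m * r i * u i) with hX2
  set R := (n : ℝ)⁻¹ * ∑ i, L (r i ^ (m + 1)) with hR
  have E0 : 0 ≤ E := H0 _ (ss_pow se _) ((dem _).trans (by omega))
  have X10 : 0 ≤ X1 := H0 _ ((ss_pow se _).mul ss_objp) (dg_mul (dem m) dg_objp (by omega))
  have X20 : 0 ≤ X2 := mul_nonneg hni (Finset.sum_nonneg fun i _ =>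
    U0 i _ ((ss_pow se _).mul (sr i)) (dg_mul (dem m) (dr i) (by omega)))
  have R0 : 0 ≤ R := mul_nonneg hni (Finset.sum_nonneg fun i _ =>
    H0 _ (ss_pow (sr i) _) ((drm i _).trans (by omega)))
  have hEX : E ≤ X1 + X2 := by
    have d1 : ∀ i, L (e ^ m * r i) ≤ L (e ^ m * ∑ j, Fp i j ^ 2) + L (e ^ m * r i * u i) := by
      intro i
      by_cases hi : i ∈ G
      · simp only [hu, hi, if_true]
        have : e ^ m * r i = (∑ j, e ^ m * (Rp y0 A0 i j ^ 2 * Xw i)) + e ^ m * r i * (1 - Xw i) := by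
          rw [← Finset.mul_sum, ← Finset.sum_mul]
          simp only [hr, rp]; ring
        calc L (e ^ m * r i) = _ := congrArg L this
          _ = (∑ j, L (e ^ m * (Rp y0 A0 i j ^ 2 * Xw i))) + L (e ^ m * r i * (1 - Xw i)) := by
            rw [map_add, map_sum]
          _ ≤ _ := by
            rw [Finset.mul_sum, map_sum]
            gcongr with j
            exact comp i hi j
      · simp only [hu, hi, if_false, mul_one]
        have := H0 (e ^ m * ∑ j, Fp i j ^ 2) ((ss_pow se m).mul (IsSumSq.sum fun _ _ => ss_sq _))
          (dg_mul (dem m) (dg_sum _ _ fun j _ => dg_pow 2 (dg_Fp i j) le_rfl) (by omega))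
        linarith
    have d2 : E = (n : ℝ)⁻¹ * ∑ i, L (e ^ m * r i) := by
      have he2 : e ^ m * e = e ^ m * (C ((n : ℝ)⁻¹) * ∑ i, r i) := congrArg (e ^ m * ·) rfl
      rw [hE, pow_succ, he2, mul_left_comm, L_C, Finset.mul_sum, map_sum]
    have d3 : X1 = (n : ℝ)⁻¹ * ∑ i, L (e ^ m * ∑ j, Fp i j ^ 2) := by
      rw [hX1, objp, mul_left_comm, L_C, Finset.mul_sum, map_sum]
    rw [d2, d3, hX2, ← mul_add, ← Finset.sum_add_distrib]
    exact mul_le_mul_of_nonneg_left (Finset.sum_le_sum fun i _ => d1 i) hni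
  clear_value E X1 X2 R
  have nat_C : ∀ l : ℕ, ((l : ℕ) : MvPolynomial (V3 n dx dy) ℝ) = C (l : ℝ) := fun l =>
    (map_natCast C l).symm
  have hO0 : 0 ≤ errF y0 A0 xs := by
    unfold errF
    exact mul_nonneg (by positivity)
      (Finset.sum_nonneg fun i _ => Finset.sum_nonneg fun _ _ => sq_nonneg _)
  have h1 : X1 ^ (m + 1) ≤ E ^ m * errF y0 A0 xs ^ (m + 1) := by
    refine sc_holder m X10 E0 (pow_nonneg hO0 _) fun l hl => ?_
    have sy := ss_young se ((ss_C hl.le).mul (ss_objp (n := n) (dx := dx) (dy := dy))) m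
    have := H0 _ sy ?_
    · rw [nat_C, nat_C, map_sub, map_add, L_C, L_C, mul_pow, ← C_pow, L_C, mul_left_comm (e ^ m),
        L_C] at this
      have h5 := mul_le_mul_of_nonneg_left Hobj (by positivity : 0 ≤ l ^ (m + 1))
      rw [hE, hX1]
      linarith
    · have dl : (C l * objp n dx dy).totalDegree ≤ 4 := dg_mul (dg_C _ 0) dg_objp le_rfl
      rw [nat_C, nat_C]
      exact dg_sub (dg_add (dg_mul (dg_C _ 0) (dem _) (by omega)) (dg_pow _ dl (by omega)))
        (dg_mul (dg_C _ 0) (dg_mul (dem m) dl (le_refl _)) (by omega))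
  have h2 : X2 ^ (m + 1) ≤ (2 * β * E) ^ m * R := by
    have p0 : 0 ≤ 2 * β * E := mul_nonneg (mul_nonneg zero_le_two hβ0) E0
    refine sc_holder m X20 p0 R0 fun l hl => ?_
    have key : ∀ i, ((m + 1 : ℕ) : ℝ) * (l * L (e ^ m * r i * u i)) ≤
        m * L (e ^ (m + 1) * u i) + l ^ (m + 1) * L (r i ^ (m + 1)) := by
      intro i
      have sy := ss_young se ((ss_C hl.le).mul (sr i)) m
      have := U0 i _ sy ?_
      · have hh1 : ((m : MvPolynomial (V3 n dx dy) ℝ) * e ^ (m + 1) + (C l * r i) ^ (m + 1) -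
            ((m + 1 : ℕ) : MvPolynomial (V3 n dx dy) ℝ) * (e ^ m * (C l * r i))) * u i =
          C (m : ℝ) * (e ^ (m + 1) * u i) + C (l ^ (m + 1)) * (r i ^ (m + 1) * u i) -
            C ((m + 1 : ℕ) : ℝ) * (C l * (e ^ m * r i * u i)) := by
          rw [nat_C, nat_C, mul_pow, ← C_pow]; ring
        rw [hh1, map_sub, map_add, L_C, L_C, L_C, L_C] at this
        have h5 := mul_le_mul_of_nonneg_left
          (U1 i (r i ^ (m + 1)) (ss_pow (sr i) _) (drm i _)) (by positivity : 0 ≤ l ^ (m + 1))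
        linarith
      · have dl : (C l * r i).totalDegree ≤ 2 := dg_mul (dg_C _ 0) (dr i) le_rfl
        rw [nat_C, nat_C]
        exact dg_sub (dg_add (dg_mul (dg_C _ 0) (dem _) (by omega)) (dg_pow _ dl (by omega)))
          (dg_mul (dg_C _ 0) (dg_mul (dem m) dl (le_refl _)) (by omega))
    have s1 := mul_le_mul_of_nonneg_left (Finset.sum_le_sum fun i (_ : i ∈ Finset.univ) => key i) hni
    rw [Finset.sum_add_distrib, ← Finset.mul_sum, ← Finset.mul_sum, ← Finset.mul_sum,
      ← Finset.mul_sum] at s1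
    have s2 := mul_le_mul_of_nonneg_left (US (e ^ (m + 1)) (ss_pow se _) (dem _))
      (Nat.cast_nonneg m : (0 : ℝ) ≤ m)
    rw [hX2, hR, hE]
    linarith
  have hRb : R ≤ 2 ^ (2 * m + 1) * ((n : ℝ)⁻¹ *
          ∑ i, (∑ j, (y0 i j - ∑ k', A0 i k' j * xs k') ^ 2) ^ (m + 1)) +
        Cp * 2 ^ (4 * m + 2) * (E + errF y0 A0 xs ^ (m + 1)) := by
    have sy := R_bound_sos y0 A0 xs m Cp hCp hh
    rw [← he, ← hr] at sy
    have LC : ∀ c : ℝ, L (C c) = c := fun c => by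
      have := L_C L c 1
      rwa [mul_one, H1, mul_one] at this
    have := H0 _ sy ?_
    · rw [map_sub, map_add, L_C, L_C, map_add, map_sum, LC, LC] at this
      rw [hR, hE]
      linarith
    · exact dg_sub (dg_add (dg_C _ _) (dg_mul (dg_C _ 0) (dg_add ((dem (m + 1)).trans
        (by omega : _ ≤ 2 * (m + 1))) (dg_C _ _)) (by omega)))
        (dg_mul (dg_C _ 0) (dg_sum _ _ fun i _ => drm i (m + 1)) (by omega))
  have hm0 : 0 ≤ L e := H0 _ se (by omega)
  have hm1 : L e ^ (m + 1) ≤ E := by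
    have : L e ^ (m + 1) ≤ 1 ^ m * E := by
      refine sc_holder m hm0 zero_le_one E0 fun l hl => ?_
      have sy := ss_young (IsSumSq.one (R := MvPolynomial (V3 n dx dy) ℝ)) ((ss_C hl.le).mul se) m
      have := H0 _ sy ?_
      · rw [nat_C, nat_C, map_sub, map_add, L_C, L_C, mul_pow, ← C_pow, L_C, one_pow, one_pow,
          one_mul, L_C, H1] at this
        rw [hE]
        linarith
      · have dl : (C l * e).totalDegree ≤ 2 := dg_mul (dg_C _ 0) de le_rfl
        rw [nat_C, nat_C, one_pow, one_pow, one_mul]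
        exact dg_sub (dg_add (dg_mul (dg_C _ 0) (dg_one 0) (by omega)) (dg_pow _ dl (by omega)))
          (dg_mul (dg_C _ 0) dl (by omega))
    simpa using this
  have hjen : errF y0 A0 (fun k => L (Xx3 k)) ≤ L e := by
    have LC : ∀ c : ℝ, L (C c) = c := fun c => by
      have := L_C L c 1
      rwa [mul_one, H1, mul_one] at this
    rw [he, errp, L_C, errF, map_sum]
    refine mul_le_mul_of_nonneg_left (Finset.sum_le_sum fun i _ => ?_) hni
    rw [rp, map_sum]
    refine Finset.sum_le_sum fun j _ => ?_
    have hL : L (Rp y0 A0 i j) = y0 i j - ∑ k, A0 i k j * L (Xx3 k) := by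
      rw [Rp, map_sub, map_sum, LC]
      simp only [L_C]
    rw [← hL]
    set c := L (Rp y0 A0 i j) with hc
    have := H0 ((Rp y0 A0 i j - C c) ^ 2) (ss_sq _)
      (dg_pow 2 (dg_sub (dg_Rp y0 A0 i j) (dg_C _ _)) (by omega))
    have h5 : (Rp y0 A0 i j - C c) ^ 2 = Rp y0 A0 i j ^ 2 - C (2 * c) * Rp y0 A0 i j + C (c ^ 2) := by
      rw [C_mul, C_pow, map_ofNat]; ring
    rw [h5, map_add, map_sub, L_C, LC, ← hc] at this
    linarith
  refine hjen.trans ?_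
  exact sc_final m E0 R0 (mul_nonneg hni (Finset.sum_nonneg fun i _ => pow_nonneg
    (Finset.sum_nonneg fun _ _ => sq_nonneg _) _)) hO0 hβ0 hCp X10 X20 hEX h1 h2 rfl hRb hck hck1
    hC1 hC2 hm1 hm0

end core2

section final

def LLin {V : Type*} (μ : (V → ℝ) →₀ ℝ) : MvPolynomial V ℝ →ₗ[ℝ] ℝ where
  toFun q := pExpect μ fun z => MvPolynomial.eval z q
  map_add' p q := by
    simp only [pExpect, map_add, mul_add, Finset.sum_add_distrib]
  map_smul' c q := by
    simp only [pExpect, smul_eval, RingHom.id_apply, smul_eq_mul, Finset.mul_sum]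
    exact Finset.sum_congr rfl fun z _ => by ring

lemma LLin_apply {V : Type*} (μ : (V → ℝ) →₀ ℝ) (q : MvPolynomial V ℝ) :
    LLin μ q = pExpect μ fun z => MvPolynomial.eval z q := rfl

lemma sat_zero {V ι : Type*} [Fintype ι] [DecidableEq ι] {μ : (V → ℝ) →₀ ℝ} {l k : ℕ}
    {S : ι → MvPolynomial V ℝ} (hsat : PDSatisfies μ l S k) (h : MvPolynomial V ℝ)
    (sh : IsSumSq h) (dh : h.totalDegree ≤ l) : 0 ≤ LLin μ h := by
  have := hsat ∅ h ((h_sos_iff h).2 sh) (by simpa using dh)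
  rw [LLin_apply]
  simpa using this

lemma sat_eq {V ι : Type*} [Fintype ι] [DecidableEq ι] {μ : (V → ℝ) →₀ ℝ} {l k : ℕ}
    {S : ι → MvPolynomial V ℝ} (hsat : PDSatisfies μ l S k) (a b : ι) (f : MvPolynomial V ℝ)
    (ha : S a = f) (hb : S b = -f) (df : f.totalDegree ≤ k) (h : MvPolynomial V ℝ)
    (sh : IsSumSq h) (dh : h.totalDegree + k ≤ l) : LLin μ (h * f) = 0 := by
  have h1 := hsat {a} h ((h_sos_iff h).2 sh) (by
    rw [Finset.sum_singleton, ha, max_eq_right df]; exact dh)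
  have h2 := hsat {b} h ((h_sos_iff h).2 sh) (by
    rw [Finset.sum_singleton, hb, totalDegree_neg, max_eq_right df]; exact dh)
  rw [← LLin_apply, Finset.prod_singleton, ha] at h1
  rw [← LLin_apply, Finset.prod_singleton, hb, mul_neg, map_neg] at h2
  linarith

lemma single_feasible {V ι : Type*} [Fintype ι] [DecidableEq ι] (z : V → ℝ)
    (S : ι → MvPolynomial V ℝ) (l k : ℕ) (hS : ∀ i, 0 ≤ MvPolynomial.eval z (S i)) :
    IsPseudoDist (Finsupp.single z (1 : ℝ)) l ∧ PDSatisfies (Finsupp.single z (1 : ℝ)) l S k := by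
  have hE : ∀ f : (V → ℝ) → ℝ, pExpect (Finsupp.single z (1 : ℝ)) f = f z := by
    intro f
    rw [pExpect, Finsupp.support_single_ne_zero _ one_ne_zero]
    simp
  refine ⟨⟨?_, ?_⟩, ?_⟩
  · rw [Finsupp.support_single_ne_zero _ one_ne_zero]; simp
  · intro p _
    rw [hE]; positivity
  · intro T h sh _
    rw [hE]
    obtain ⟨N, q, rfl⟩ := sh
    rw [map_mul, map_prod]
    refine mul_nonneg ?_ (Finset.prod_nonneg fun i _ => hS i)
    rw [map_sum]
    exact Finset.sum_nonneg fun j _ => by rw [map_pow]; positivity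

lemma pE_single {V : Type*} (z : V → ℝ) (f : (V → ℝ) → ℝ) :
    pExpect (Finsupp.single z (1 : ℝ)) f = f z := by
  rw [pExpect, Finsupp.support_single_ne_zero _ one_ne_zero]
  simp

lemma ss_map {R S : Type*} [CommRing R] [CommRing S] (f : R →+* S) {a : R} (h : IsSumSq a) :
    IsSumSq (f a) := by
  induction h with
  | zero => simp
  | sq_add a hs ih => rw [map_add, map_mul]; exact (IsSumSq.mul_self _).add ih

lemma obj_eq (n dx dy m : ℕ) : objLTS1 n dx dy (2 * (m + 1)) = objp n dx dy ^ (m + 1) := by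
  unfold objLTS1 objp Fp
  rw [Nat.mul_div_cancel_left _ two_pos]

end final

/-- A priori estimation contract for the moment relaxation of (LTS1)
(Theorem 3, adapted from Klivans et al.): under `k`-certifiable
`C`-hypercontractivity of the uncorrupted measurement matrices and `c_k < 1`
(equivalently `β < β_max`), the pseudo-expectation estimate `x̂ = Ẽ[x]` of an
objective-minimizing level-`2r` pseudo-distribution (`r ≥ k`) satisfying `L` at
degree `k` obeys
`err(x̂) ≤ (1 + C₁^{2/k})·opt + C₂^{2/k}·((1/n)∑_i ‖y°_i − (A°_i)ᵀ x*‖^k)^{2/k}`. -/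
theorem lts1_hypercontractive_contract
    {n dx dy mX : ℕ} (hn : 0 < n) (hdx : 0 < dx) (hdy : 0 < dy)
    (y0 : Fin n → Fin dy → ℝ) (A0 : Fin n → Matrix (Fin dx) (Fin dy) ℝ)
    (y : Fin n → Fin dy → ℝ) (A : Fin n → Matrix (Fin dx) (Fin dy) ℝ)
    (β : ℝ) (hβ0 : 0 ≤ β) (hβ1 : β < 1)
    (hβint : ∃ m : ℕ, (m : ℝ) = β * n)
    (G : Finset (Fin n)) (hGcard : (1 - β) * n ≤ G.card)
    (hG : ∀ i ∈ G, (∀ j, y i j = y0 i j) ∧ A i = A0 i)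
    (g : Fin mX → MvPolynomial (Fin dx) ℝ)
    (Mx : ℝ) (hMx : 0 < Mx)
    (j0 : Fin mX)
    (hj0 : g j0 = C (Mx ^ 2) - ∑ k, (X k : MvPolynomial (Fin dx) ℝ) ^ 2)
    (xstar : Fin dx → ℝ) (hxstar : ∀ j, 0 ≤ MvPolynomial.eval xstar (g j))
    (hxstarmin : ∀ x : Fin dx → ℝ, (∀ j, 0 ≤ MvPolynomial.eval x (g j)) →
      errF y0 A0 xstar ≤ errF y0 A0 x)
    (Cf : ℕ → ℝ) (hCf : ∀ t, 0 ≤ Cf t)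
    (k : ℕ) (hk4 : 4 ≤ k) (hke : Even k) (hkpow : ∃ t : ℕ, k / 2 = 2 ^ t)
    (hhyper : Hypercontractive A0 k Cf)
    (ck C1 C2 : ℝ)
    (hck : ck = (2 * β) ^ (k / 2 - 1) * Cf (k / 2) ^ (k / 2) * 2 ^ (k / 2) * 2 ^ (2 * k))
    (hcklt : ck < 1)
    (hC1 : C1 = ck / (1 - ck))
    (hC2 : C2 = (2 * β) ^ (k / 2 - 1) *
      ((2 : ℝ) ^ k + Cf (k / 2) ^ (k / 2) * 2 ^ (2 * k)) / (1 - ck))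
    (r : ℕ) (hr : k ≤ r)
    (μ : (V3 n dx dy → ℝ) →₀ ℝ)
    (hpd : IsPseudoDist μ (2 * r))
    (hsat : PDSatisfies μ (2 * r) (sysL y A g (1 - β)) k)
    (hmin : ∀ ν : (V3 n dx dy → ℝ) →₀ ℝ, IsPseudoDist ν (2 * r) →
      PDSatisfies ν (2 * r) (sysL y A g (1 - β)) k →
      pExpect μ (fun z => MvPolynomial.eval z (objLTS1 n dx dy k)) ≤
        pExpect ν (fun z => MvPolynomial.eval z (objLTS1 n dx dy k))) :
    errF y0 A0 (fun k' => pExpect μ fun z => z (Sum.inr (Sum.inl k'))) ≤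
      (1 + C1 ^ ((2 : ℝ) / k)) * errF y0 A0 xstar +
        C2 ^ ((2 : ℝ) / k) *
          ((n : ℝ)⁻¹ *
              ∑ i, (∑ j, (y0 i j - ∑ k', A0 i k' j * xstar k') ^ 2) ^ (k / 2)) ^
            ((2 : ℝ) / k) := by

  classical
  obtain ⟨m, rfl⟩ : ∃ m, k = 2 * (m + 1) := by
    obtain ⟨a, rfl⟩ := hke
    exact ⟨a - 1, by omega⟩
  have hk2 : 2 * (m + 1) / 2 = m + 1 := Nat.mul_div_cancel_left _ two_pos
  have hexp : (2 : ℝ) / ((2 * (m + 1) : ℕ) : ℝ) = 1 / ((m + 1 : ℕ) : ℝ) := by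
    push_cast
    have hm0 : (m : ℝ) + 1 ≠ 0 := by positivity
    field_simp
  rw [hk2, Nat.add_sub_cancel] at hck hC2
  rw [hexp, hk2]
  set Cp := Cf (m + 1) ^ (m + 1) with hCp
  have hCp0 : 0 ≤ Cp := pow_nonneg (hCf _) _
  have hxh : ∀ k' : Fin dx, (pExpect μ fun z => z (Sum.inr (Sum.inl k'))) = LLin μ (Xx3 k') := by
    intro k'
    simp only [LLin_apply, Xx3, eval_X]
  simp only [hxh]
  have dw : ∀ i : Fin n, (Xw i : MvPolynomial (V3 n dx dy) ℝ).totalDegree ≤ 1 :=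
    fun i => dg_Xw i le_rfl
  refine core_L hn y0 A0 y A β hβ0 G hGcard hG xstar m (LLin μ) ?_ ?_ ?_ ?_ ?_ ?_ ?_ Cp hCp0 ?_
    ck C1 C2 ?_ hcklt hC1 ?_
  · rw [LLin_apply, pExpect]
    simpa using hpd.1
  · intro h sh dh
    exact sat_zero hsat h sh (by omega)
  · intro i h sh dh
    refine sat_eq hsat (Sum.inr (Sum.inl i)) (Sum.inl i) _ rfl ?_ ?_ h sh (by omega)
    · simp only [sysL]; ring
    · exact dg_sub (dg_pow 2 (dw i) (by omega)) ((dw i).trans (by omega))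
  · intro h sh dh
    refine sat_eq hsat (Sum.inr (Sum.inr (Sum.inl 1))) (Sum.inr (Sum.inr (Sum.inl 0))) _ ?_ ?_ ?_
      h sh (by omega)
    · simp [sysL]
    · simp [sysL]
    · exact dg_sub (dg_sum _ _ fun i _ => (dw i).trans (by omega)) (dg_C _ _)
  · intro i j h sh dh
    refine sat_eq hsat (Sum.inr (Sum.inr (Sum.inr (Sum.inl (i, j)))))
      (Sum.inr (Sum.inr (Sum.inr (Sum.inr (Sum.inl (i, j)))))) _ rfl rfl ?_ h sh (by omega)
    exact dg_mul (dw i) (dg_sub (dg_X _ le_rfl) (dg_C _ 1)) (by omega)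
  · intro i k' j h sh dh
    refine sat_eq hsat (Sum.inr (Sum.inr (Sum.inr (Sum.inr (Sum.inr (Sum.inl (i, k', j)))))))
      (Sum.inr (Sum.inr (Sum.inr (Sum.inr (Sum.inr (Sum.inr (Sum.inl (i, k', j)))))))) _ rfl rfl ?_
      h sh (by omega)
    exact dg_mul (dw i) (dg_sub (dg_X _ le_rfl) (dg_C _ 1)) (by omega)
  · -- comparison with the point mass at the true solution
    obtain ⟨q, hq⟩ := hβint
    have hqn : q ≤ n := by
      have h1 : (q : ℝ) ≤ n := by
        rw [hq]
        have : (0 : ℝ) ≤ n := Nat.cast_nonneg n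
        nlinarith
      exact_mod_cast h1
    have hcard : ((n - q : ℕ) : ℝ) = (1 - β) * n := by
      rw [Nat.cast_sub hqn, hq]; ring
    obtain ⟨G', hG', hG'c⟩ : ∃ G' ⊆ G, G'.card = n - q := by
      apply Finset.exists_subset_card_eq
      rw [← hcard] at hGcard
      exact_mod_cast hGcard
    let z : V3 n dx dy → ℝ := fun v => match v with
      | Sum.inl i => if i ∈ G' then 1 else 0
      | Sum.inr (Sum.inl k') => xstar k'
      | Sum.inr (Sum.inr (Sum.inl (i, j))) => y0 i j
      | Sum.inr (Sum.inr (Sum.inr (i, k', j))) => A0 i k' j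
    have zw : ∀ i, eval z (Xw i : MvPolynomial (V3 n dx dy) ℝ) = if i ∈ G' then 1 else 0 :=
      fun i => by simp only [Xw, eval_X, z]
    have zx : ∀ i, eval z (Xx3 i : MvPolynomial (V3 n dx dy) ℝ) = xstar i :=
      fun i => by simp only [Xx3, eval_X, z]
    have zy : ∀ i j, eval z (Xy3 i j : MvPolynomial (V3 n dx dy) ℝ) = y0 i j :=
      fun i j => by simp only [Xy3, eval_X, z]
    have zA : ∀ i k' j, eval z (XA3 i k' j : MvPolynomial (V3 n dx dy) ℝ) = A0 i k' j :=
      fun i k' j => by simp only [XA3, eval_X, z]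
    have zsum : eval z (∑ i, Xw i : MvPolynomial (V3 n dx dy) ℝ) = (1 - β) * n := by
      rw [map_sum]
      simp only [zw]
      rw [← hcard, ← hG'c]
      simp
    have zy' : ∀ i j, eval z (Xw i * (Xy3 i j - C (y i j)) : MvPolynomial (V3 n dx dy) ℝ) = 0 := by
      intro i j
      rw [map_mul, map_sub, zw, zy, eval_C]
      split_ifs with hi
      · rw [(hG i (hG' hi)).1 j]; ring
      · ring
    have zA' : ∀ i k' j,
        eval z (Xw i * (XA3 i k' j - C (A i k' j)) : MvPolynomial (V3 n dx dy) ℝ) = 0 := by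
      intro i k' j
      rw [map_mul, map_sub, zw, zA, eval_C]
      split_ifs with hi
      · rw [(hG i (hG' hi)).2]; ring
      · ring
    have feas := single_feasible z (sysL y A g (1 - β)) (2 * r) (2 * (m + 1)) (by
      rintro (i | i | j | ⟨i, j⟩ | ⟨i, j⟩ | ⟨i, k', j⟩ | ⟨i, k', j⟩ | j)
      · simp only [sysL, map_sub, map_pow, zw]; split_ifs <;> norm_num
      · simp only [sysL, map_sub, map_pow, zw]; split_ifs <;> norm_num
      · simp only [sysL]
        split_ifs <;> rw [map_sub, zsum, eval_C, sub_self]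
      · simp only [sysL]; rw [zy']
      · simp only [sysL]; rw [map_neg, zy', neg_zero]
      · simp only [sysL]; rw [zA']
      · simp only [sysL]; rw [map_neg, zA', neg_zero]
      · simp only [sysL, eval_rename]
        exact hxstar j)
    have hle := hmin _ feas.1 feas.2
    rw [pE_single, ← LLin_apply, obj_eq] at hle
    refine hle.trans (le_of_eq ?_)
    rw [map_pow]
    congr 1
    simp only [objp, Fp, errF, map_mul, map_sum, map_pow, map_sub, eval_C, zx, zy, zA]
  · have hs := hhyper (m + 1) (by omega) (by omega)
    rw [h_sos_iff] at hs
    have := ss_map (aeval (fun k' : Fin dx =>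
      (Xx3 k' - C (xstar k') : MvPolynomial (V3 n dx dy) ℝ))).toRingHom hs
    simpa [normAPoly, app, hCp, algebraMap_eq] using this
  · rw [hck]; ring
  · rw [hC2]
    have : (2 : ℝ) ^ (2 * (2 * (m + 1))) = 2 ^ (4 * (m + 1)) := by congr 1; ring
    rw [this]
end
end

section
/- For every real N > 0, the function α ↦ 1 − (1 − α/2)^{N/α} is nondecreasing on the interval (0, 1]. Consequently, for every real α with 0.01 ≤ α ≤ 1 one has 1 − (1 − α/2)^{10/α} ≥ 0.99. -/
/-- For every real `N > 0`, the function `α ↦ 1 − (1 − α/2)^(N/α)` (real power)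
is nondecreasing on `(0, 1]`; consequently, for `0.01 ≤ α ≤ 1` one has
`1 − (1 − α/2)^(10/α) ≥ 0.99`. -/
theorem success_probability_monotone_and_bound :
    (∀ N : ℝ, 0 < N →
      MonotoneOn (fun α : ℝ => 1 - (1 - α / 2) ^ (N / α)) (Set.Ioc (0 : ℝ) 1)) ∧
    (∀ α : ℝ, (0.01 : ℝ) ≤ α → α ≤ 1 →
      (0.99 : ℝ) ≤ 1 - (1 - α / 2) ^ ((10 : ℝ) / α)) := by
  refine ⟨?_, ?_⟩
  · rintro N hN a ⟨ha, ha1⟩ b ⟨hb, hb1⟩ hab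
    have h1 : (1 + -(b / 2)) ^ (a / b) ≤ 1 + (a / b) * (-(b / 2)) :=
      rpow_one_add_le_one_add_mul_self (by linarith) (by positivity)
        ((div_le_one hb).2 hab)
    have h2 : 1 + (a / b) * (-(b / 2)) = 1 - a / 2 := by field_simp; ring
    rw [h2, ← sub_eq_add_neg] at h1
    have hb0 : 0 ≤ 1 - b / 2 := by linarith
    have h3 := Real.rpow_le_rpow (Real.rpow_nonneg hb0 _) h1 (by positivity : 0 ≤ N / a)
    rw [← Real.rpow_mul hb0] at h3
    have h4 : a / b * (N / a) = N / b := by field_simp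
    rw [h4] at h3
    show 1 - (1 - a / 2) ^ (N / a) ≤ 1 - (1 - b / 2) ^ (N / b)
    linarith
  · intro α h0 h1
    have hα : 0 < α := by norm_num at h0; linarith
    have h2 : 1 - α / 2 ≤ Real.exp (-(α / 2)) := by
      have := Real.add_one_le_exp (-(α / 2))
      linarith
    have h3 := Real.rpow_le_rpow (by linarith) h2 (by positivity : 0 ≤ (10 : ℝ) / α)
    rw [← Real.exp_mul] at h3
    have h4 : -(α / 2) * (10 / α) = -5 := by field_simp; norm_num
    rw [h4] at h3
    have h5 : (100 : ℝ) ≤ Real.exp 5 := by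
      have h6 : Real.exp 5 = Real.exp 1 ^ 5 := by
        rw [← Real.exp_nat_mul]; norm_num
      have h7 : (2.7 : ℝ) ≤ Real.exp 1 := by
        have := Real.exp_one_gt_d9
        norm_num at this ⊢
        linarith
      rw [h6]
      calc (100 : ℝ) ≤ 2.7 ^ 5 := by norm_num
        _ ≤ _ := by gcongr
    have h8 : Real.exp (-5) ≤ 1 / 100 := by
      rw [Real.exp_neg, ← one_div]
      exact one_div_le_one_div_of_le (by norm_num) h5
    norm_num at h8 ⊢
    linarith
end

section
/- Let n ≥ 1, let ω ∈ ℝⁿ satisfy ω_i² = ω_i for all i, and let q ∈ ℝ⁴ satisfy ‖q‖² = 1. Let m ∈ ℝ^{5(n+1)} be the vector with entries m[1] := 1, m[ω_i] := ω_i (i = 1,…,n), m[q_a] := q_a (a = 1,…,4), and m[ω_i q_a] := ω_i·q_a, and let X := m·mᵀ, with entries X[u, v] := m[u]·m[v] indexed by these labels. Then X is symmetric positive semidefinite and satisfies the constraints of the sparse order-2 moment relaxation: X[1,1] = 1; X[ω_i, ω_i] = X[ω_i, 1] for all i; X[ω_i q_a, ω_i q_b] = X[q_a, ω_i q_b] for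 all i, a, b; X[1, ω_i q_a] = X[ω_i, q_a] = X[ω_i, ω_i q_a] for all i, a; X[ω_i q_a, ω_j q_b] = X[ω_j q_b, ω_i q_a] for all i, j, a, b; and ∑_{a=1}^4 X[ω_i q_a, ω_j q_a] = X[ω_i, ω_j] for all i, j. Moreover the relaxation preserves objective and data constraints: ∑_{i=1}^n X[ω_i, 1]² = ∑_{i=1}^n ω_i²; if ∑_{i=1}^n ω_i = αn then ∑_{i=1}^n X[ω_i, 1] = αn; and if, for given reals r_i and symmetric 4×4 matrices M_i, ω_i·(r_i − 2·qᵀM_i q) ≤ c̄² for all i, then X[ω_i, 1]·r_i − 2·∑_{a,b} (M_i)_{ab}·X[q_a, ω_i q_b] ≤ c̄² for all i. Consequently, the optimal value of the sparse semidefinite relaxation is at most the optimal value of the underlying polynomial optimization problem. -/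
open scoped BigOperators
open Matrix

noncomputable section

/-- Labels of the sparse monomial basis `(1, ω₁,…,ω_n, q₁,…,q₄, ω₁q₁,…,ω_nq₄)`
(a set of cardinality `5(n+1)`). -/
abbrev MomLbl (n : ℕ) : Type := Unit ⊕ Fin n ⊕ Fin 4 ⊕ (Fin n × Fin 4)

def lbl1 {n : ℕ} : MomLbl n := Sum.inl ()
def lblω {n : ℕ} (i : Fin n) : MomLbl n := Sum.inr (Sum.inl i)
def lblq {n : ℕ} (a : Fin 4) : MomLbl n := Sum.inr (Sum.inr (Sum.inl a))
def lblωq {n : ℕ} (i : Fin n) (a : Fin 4) : MomLbl n :=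
  Sum.inr (Sum.inr (Sum.inr (i, a)))

/-- The sparse monomial basis vector `m(ω, q)`. -/
def basisVec {n : ℕ} (ω : Fin n → ℝ) (q : Fin 4 → ℝ) : MomLbl n → ℝ :=
  Sum.elim (fun _ => 1) (Sum.elim ω (Sum.elim q fun p => ω p.1 * q p.2))

/-- Feasibility for the sparse order-2 semidefinite (moment) relaxation. -/
def SDPFeasible (n : ℕ) (α cbar : ℝ) (r : Fin n → ℝ)
    (M : Fin n → Matrix (Fin 4) (Fin 4) ℝ) (Y : Matrix (MomLbl n) (MomLbl n) ℝ) :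
    Prop :=
  Y.PosSemidef ∧
  Y lbl1 lbl1 = 1 ∧
  (∀ i, Y (lblω i) (lblω i) = Y (lblω i) lbl1) ∧
  (∀ i a b, Y (lblωq i a) (lblωq i b) = Y (lblq a) (lblωq i b)) ∧
  (∀ i a, Y lbl1 (lblωq i a) = Y (lblω i) (lblq a)) ∧
  (∀ i a, Y (lblω i) (lblq a) = Y (lblω i) (lblωq i a)) ∧
  (∀ i j a b, Y (lblωq i a) (lblωq j b) = Y (lblωq j b) (lblωq i a)) ∧
  (∀ i j, ∑ a, Y (lblωq i a) (lblωq j a) = Y (lblω i) (lblω j)) ∧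
  (∑ a, Y (lblq a) (lblq a)) = 1 ∧
  (∑ i, Y (lblω i) lbl1) = α * n ∧
  ∀ i, Y (lblω i) lbl1 * r i - 2 * ∑ a, ∑ b, M i a b * Y (lblq a) (lblωq i b) ≤
    cbar ^ 2

/-- Feasibility for the quaternion-based polynomial optimization problem (LDR). -/
def POPFeasible (n : ℕ) (α cbar : ℝ) (r : Fin n → ℝ)
    (M : Fin n → Matrix (Fin 4) (Fin 4) ℝ) (ω : Fin n → ℝ) (q : Fin 4 → ℝ) :
    Prop :=
  (∀ i, ω i ^ 2 = ω i) ∧ (∑ a, q a ^ 2) = 1 ∧ (∑ i, ω i) = α * n ∧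
  ∀ i, ω i * (r i - 2 * ∑ a, ∑ b, q a * M i a b * q b) ≤ cbar ^ 2

theorem basis_entries {n : ℕ} (ω : Fin n → ℝ) (q : Fin 4 → ℝ) :
    basisVec ω q lbl1 = 1 ∧ (∀ i, basisVec ω q (lblω i) = ω i) ∧
    (∀ a, basisVec ω q (lblq a) = q a) ∧ ∀ i a, basisVec ω q (lblωq i a) = ω i * q a :=
  ⟨rfl, fun _ => rfl, fun _ => rfl, fun _ _ => rfl⟩

theorem lift_posSemidef {n : ℕ} (m : MomLbl n → ℝ) : (Matrix.vecMulVec m m).PosSemidef := by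
  simpa using Matrix.posSemidef_vecMulVec_self_star m

theorem lift_data {n : ℕ} (cbar : ℝ) (r : Fin n → ℝ)
    (M : Fin n → Matrix (Fin 4) (Fin 4) ℝ) (ω : Fin n → ℝ) (q : Fin 4 → ℝ)
    (h : ∀ i, ω i * (r i - 2 * ∑ a, ∑ b, q a * M i a b * q b) ≤ cbar ^ 2) (i : Fin n) :
    ω i * 1 * r i - 2 * ∑ a, ∑ b, M i a b * (q a * (ω i * q b)) ≤ cbar ^ 2 := by
  have e : ∑ a, ∑ b, M i a b * (q a * (ω i * q b))
      = ω i * ∑ a, ∑ b, q a * M i a b * q b := by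
    simp only [Finset.mul_sum]
    exact Finset.sum_congr rfl fun a _ => Finset.sum_congr rfl fun b _ => by ring
  rw [e]
  linarith [h i]

theorem lift_norm {n : ℕ} (ω : Fin n → ℝ) (q : Fin 4 → ℝ) (hq : (∑ a, q a ^ 2) = 1)
    (i j : Fin n) : ∑ a, ω i * q a * (ω j * q a) = ω i * ω j := by
  have e : ∑ a, ω i * q a * (ω j * q a) = ω i * ω j * ∑ a, q a ^ 2 := by
    rw [Finset.mul_sum]
    exact Finset.sum_congr rfl fun a _ => by ring
  rw [e, hq, mul_one]

theorem lift_feasible {n : ℕ} {α cbar : ℝ} {r : Fin n → ℝ}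
    {M : Fin n → Matrix (Fin 4) (Fin 4) ℝ} {ω : Fin n → ℝ} {q : Fin 4 → ℝ}
    (h : POPFeasible n α cbar r M ω q) :
    SDPFeasible n α cbar r M (Matrix.vecMulVec (basisVec ω q) (basisVec ω q)) := by
  obtain ⟨hω, hq, hs, hd⟩ := h
  obtain ⟨e1, e2, e3, e4⟩ := basis_entries ω q
  refine ⟨lift_posSemidef _, ?_⟩
  simp only [Matrix.vecMulVec_apply, e1, e2, e3, e4]
  refine ⟨by norm_num, fun i => ?_, fun i a b => ?_, fun i a => ?_, fun i a => ?_,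
    fun i j a b => by ring, lift_norm ω q hq, ?_, by simpa using hs, lift_data cbar r M ω q hd⟩
  · linear_combination hω i
  · linear_combination q a * q b * hω i
  · ring
  · linear_combination - q a * hω i
  · rw [← hq]
    exact Finset.sum_congr rfl fun a _ => by ring

/-- Feasibility half of the sparse moment relaxation for list-decodable rotation
search: the lifted matrix `X = m·mᵀ` of any feasible point is feasible for the
SDP, preserves the objective and the data constraints, and consequently the
optimal value of the SDP relaxation is at most that of the polynomial
optimization problem. -/
theorem sparse_moment_relaxation_feasibility
    (n : ℕ) (hn : 1 ≤ n) (α cbar : ℝ) (r : Fin n → ℝ)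
    (M : Fin n → Matrix (Fin 4) (Fin 4) ℝ) (hM : ∀ i, (M i).IsSymm)
    (ω : Fin n → ℝ) (hω : ∀ i, ω i ^ 2 = ω i)
    (q : Fin 4 → ℝ) (hq : (∑ a, q a ^ 2) = 1)
    (m : MomLbl n → ℝ) (hm : m = basisVec ω q)
    (Y : Matrix (MomLbl n) (MomLbl n) ℝ) (hY : Y = Matrix.vecMulVec m m) :
    Yᵀ = Y ∧ Y.PosSemidef ∧
    Y lbl1 lbl1 = 1 ∧
    (∀ i, Y (lblω i) (lblω i) = Y (lblω i) lbl1) ∧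
    (∀ i a b, Y (lblωq i a) (lblωq i b) = Y (lblq a) (lblωq i b)) ∧
    (∀ i a, Y lbl1 (lblωq i a) = Y (lblω i) (lblq a)) ∧
    (∀ i a, Y (lblω i) (lblq a) = Y (lblω i) (lblωq i a)) ∧
    (∀ i j a b, Y (lblωq i a) (lblωq j b) = Y (lblωq j b) (lblωq i a)) ∧
    (∀ i j, ∑ a, Y (lblωq i a) (lblωq j a) = Y (lblω i) (lblω j)) ∧
    (∑ i, (Y (lblω i) lbl1) ^ 2) = ∑ i, ω i ^ 2 ∧
    ((∑ i, ω i) = α * n → (∑ i, Y (lblω i) lbl1) = α * n) ∧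
    ((∀ i, ω i * (r i - 2 * ∑ a, ∑ b, q a * M i a b * q b) ≤ cbar ^ 2) →
      ∀ i, Y (lblω i) lbl1 * r i -
          2 * ∑ a, ∑ b, M i a b * Y (lblq a) (lblωq i b) ≤ cbar ^ 2) ∧
    ((∑ i, ω i) = α * n →
      (∀ i, ω i * (r i - 2 * ∑ a, ∑ b, q a * M i a b * q b) ≤ cbar ^ 2) →
      sInf {v : ℝ | ∃ Y' : Matrix (MomLbl n) (MomLbl n) ℝ,
          SDPFeasible n α cbar r M Y' ∧ v = ∑ i, (Y' (lblω i) lbl1) ^ 2} ≤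
        sInf {v : ℝ | ∃ (ω' : Fin n → ℝ) (q' : Fin 4 → ℝ),
          POPFeasible n α cbar r M ω' q' ∧ v = ∑ i, ω' i ^ 2}) := by
  subst hm
  subst hY
  obtain ⟨e1, e2, e3, e4⟩ := basis_entries ω q
  refine ⟨?_, lift_posSemidef _, ?_⟩
  · ext u v
    simp only [Matrix.transpose_apply, Matrix.vecMulVec_apply]
    ring
  simp only [Matrix.vecMulVec_apply, e1, e2, e3, e4]
  refine ⟨by norm_num, fun i => ?_, fun i a b => ?_, fun i a => ?_, fun i a => ?_,
    fun i j a b => by ring, lift_norm ω q hq, by simp, fun hs => by simpa using hs,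
    lift_data cbar r M ω q, fun hs hd => ?_⟩
  · linear_combination hω i
  · linear_combination q a * q b * hω i
  · ring
  · linear_combination - q a * hω i
  · refine csInf_le_csInf ⟨0, ?_⟩ ⟨_, ω, q, ⟨hω, hq, hs, hd⟩, rfl⟩ ?_
    · rintro v ⟨Y', -, rfl⟩
      positivity
    · rintro v ⟨ω', q', h, rfl⟩
      refine ⟨_, lift_feasible h, ?_⟩
      obtain ⟨f1, f2, -, -⟩ := basis_entries ω' q'
      simp only [Matrix.vecMulVec_apply, f1, f2, mul_one]
end
end
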